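/- Let D ≥ 3 be odd, m ≥ 1, and d ≥ 1. For a partition ρ = (ρ_1 ≥ … ≥ ρ_m ≥ 0) of d with at most m parts, set e_ρ := Σ_{i=1}^{m} 2·⌈ρ_i/(2(D−2))⌉. Then the maximum of e_ρ over all partitions ρ of d with at most m parts equals 2d if d ≤ m, and equals 2m + 2·⌊(d−m)/(2(D−2))⌋ if d ≥ m. -/

import Mathlib

open scoped BigOperators

theorem ceil_aux (D r : ℕ) (hD : 3 ≤ D) :
    ⌈(r : ℚ) / (2 * ((D : ℚ) - 2))⌉₊ = (r + (2 * (D - 2) - 1)) / (2 * (D - 2)) := by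
  obtain ⟨k, rfl⟩ : ∃ k, D = k + 3 := ⟨D - 3, by omega⟩
  have hK : (2 * (((k + 3 : ℕ) : ℚ) - 2)) = ((2 * (k + 1) : ℕ) : ℚ) := by push_cast; ring
  have hK2 : 2 * (k + 3 - 2) = 2 * (k + 1) := by omega
  rw [hK, hK2]
  have hpos : 0 < 2 * (k + 1) := by omega
  generalize 2 * (k + 1) = K at *
  apply eq_of_forall_ge_iff
  intro n
  rw [Nat.ceil_le, div_le_iff₀ (by exact_mod_cast hpos), ← Nat.cast_mul, Nat.cast_le,
    ← Nat.lt_succ_iff (m := (r + (K - 1)) / K), Nat.div_lt_iff_lt_mul hpos, Nat.succ_mul]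
  omega

/-- Let `D ≥ 3` be odd, `m ≥ 1`, `d ≥ 1`.  For a partition `ρ` of `d` with at most `m`
parts set `e_ρ := Σ_i 2⌈ρ_i/(2(D−2))⌉`.  The maximum of `e_ρ` over all such partitions
is `2d` if `d ≤ m`, and `2m + 2⌊(d−m)/(2(D−2))⌋` if `d ≥ m`. -/
theorem max_erho_odd (D m d : ℕ) (hD : 3 ≤ D) (hDodd : Odd D) (hm : 1 ≤ m)
    (hd : 1 ≤ d) :
    (d ≤ m → IsGreatest
      {e : ℕ | ∃ ρ : Fin m → ℕ, (∀ i j : Fin m, i ≤ j → ρ j ≤ ρ i) ∧ (∑ i, ρ i = d) ∧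
        e = ∑ i, 2 * ⌈(ρ i : ℚ) / (2 * ((D : ℚ) - 2))⌉₊} (2 * d)) ∧
    (m ≤ d → IsGreatest
      {e : ℕ | ∃ ρ : Fin m → ℕ, (∀ i j : Fin m, i ≤ j → ρ j ≤ ρ i) ∧ (∑ i, ρ i = d) ∧
        e = ∑ i, 2 * ⌈(ρ i : ℚ) / (2 * ((D : ℚ) - 2))⌉₊}
      (2 * m + 2 * ((d - m) / (2 * (D - 2))))) := by
  simp only [ceil_aux D _ hD]
  have hK : 2 ≤ 2 * (D - 2) := by omega
  generalize 2 * (D - 2) = K at *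
  have h0 : (0 + (K - 1)) / K = 0 := Nat.div_eq_of_lt (by omega)
  have h1 : (1 + (K - 1)) / K = 1 := by
    rw [show 1 + (K - 1) = K by omega, Nat.div_self (by omega)]
  refine ⟨fun hdm => ⟨?_, ?_⟩, fun hmd => ⟨?_, ?_⟩⟩
  · have hs : ∑ i : Fin m, (if (i : ℕ) < d then 1 else 0) = d := by
      rw [Fin.sum_univ_eq_sum_range (fun i => if i < d then 1 else 0) m,
        ← Finset.sum_filter, Finset.sum_const, smul_eq_mul, mul_one,
        show (Finset.range m).filter (fun i => i < d) = Finset.range d by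
          ext i; simp only [Finset.mem_filter, Finset.mem_range]; omega,
        Finset.card_range]
    refine ⟨fun i => if (i : ℕ) < d then 1 else 0, ?_, hs, ?_⟩
    · intro i j hij
      have : (i : ℕ) ≤ j := hij
      dsimp only
      split_ifs <;> omega
    · rw [← Finset.mul_sum]
      congr 1
      conv_lhs => rw [← hs]
      apply Finset.sum_congr rfl
      intro i _
      dsimp only
      split_ifs
      · exact h1.symm
      · exact h0.symm
  · rintro e ⟨ρ, -, hs, rfl⟩
    rw [← Finset.mul_sum, ← hs]
    apply Nat.mul_le_mul_left
    apply Finset.sum_le_sum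
    intro i _
    rw [← Nat.lt_succ_iff, Nat.div_lt_iff_lt_mul (by omega), Nat.succ_mul]
    have : ρ i * 1 ≤ ρ i * K := Nat.mul_le_mul_left _ (by omega)
    omega
  · obtain ⟨n, rfl⟩ : ∃ n, m = n + 1 := ⟨m - 1, by omega⟩
    refine ⟨Fin.cons (d - n) (fun _ => 1), ?_, ?_, ?_⟩
    · intro i j hij
      cases i using Fin.cases with
      | zero =>
        cases j using Fin.cases with
        | zero => simp
        | succ j => simp only [Fin.cons_succ, Fin.cons_zero]; omega
      | succ i =>
        cases j using Fin.cases with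
        | zero => simp at hij
        | succ j => simp
    · simp [Fin.sum_univ_succ]; omega
    · rw [Fin.sum_univ_succ]
      simp only [Fin.cons_succ, Fin.cons_zero, h1, Finset.sum_const, Finset.card_univ,
        Fintype.card_fin, smul_eq_mul]
      rw [show d - n + (K - 1) = (d - (n + 1)) + K by omega, Nat.add_div_right _ (by omega)]
      omega
  · rintro e ⟨ρ, -, hs, rfl⟩
    rw [← Finset.mul_sum, ← mul_add]
    apply Nat.mul_le_mul_left
    have h : (∑ i, (ρ i + (K - 1)) / K) * K ≤ d + m * (K - 1) := by
      rw [Finset.sum_mul]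
      calc _ ≤ ∑ i, (ρ i + (K - 1)) :=
            Finset.sum_le_sum (fun i _ => Nat.div_mul_le_self _ _)
        _ = _ := by simp [Finset.sum_add_distrib, hs]
    rw [← Nat.add_mul_div_right _ _ (show 0 < K by omega) |>.trans (Nat.add_comm _ _),
      Nat.le_div_iff_mul_le (by omega)]
    have : m * K = m * (K - 1) + m := by
      conv_lhs => rw [show K = (K - 1) + 1 by omega]
      ring
    omega
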